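/- Let ℰ be a UDD Gaussian triangular array with standard Normal marginals and UDD function N_ℰ(τ). Then for every p, every subset S_p ⊆ {1,…,p} with q = |S_p|, and every τ ∈ (0,1): E[max_{j∈S_p} ε_p(j)/u_q] ≥ (u_{q/N_ℰ(τ)+1}/u_q)·√(1−τ)·(1 − 2^{−q/N_ℰ(τ)} − (√(2/π)/u_{q/N_ℰ(τ)+1})·2^{−q/N_ℰ(τ)}), where u_x = Φ^{←}(1 − 1/x) for x > 1. -/

import Mathlib

/-!
A maximal family of indices in `S` with pairwise covariances at most `τ` has at least `q / N(τ)`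
elements, since every index of `S` is correlated beyond `τ` with one of the family. By
Sudakov–Fernique, the expected maximum over this family is at least `√(1 - τ)` times that of
equally many independent standard Normal variables: along the circular interpolation between two
independent Gaussian vectors, Gaussian integration by parts gives a sign to the derivative of the
expected log-sum-exp, and log-sum-exp differs from the maximum by a bounded amount, which rescaling
removes.

For the maximum `M` of `m` independent standard Normal variables, `Φ(M)` is distributed as the
maximum of `m` uniform variables, so `E[Φ(M)] = m / (m + 1) ≥ Φ(u)`. Integrating the tangent line
bound `Φ(M) - Φ(u) ≤ φ(u) (M - u)`, valid on `{M > 0}` where `Φ` is concave, yields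
`E[M; M > 0] ≥ u P(M > 0)`, while `E[M; M ≤ 0]` is at least the expectation of a single coordinate
on `{M ≤ 0}`.
-/

open MeasureTheory ProbabilityTheory Filter Topology

/-- The standard Normal cumulative distribution function `Φ`. -/
noncomputable def stdGaussianCDF (u : ℝ) : ℝ :=
  ∫ x in Set.Iic u, Real.exp (-x ^ 2 / 2) / Real.sqrt (2 * Real.pi)

/-- The generalized inverse (quantile function) `Φ^{←}` of the standard Normal cdf. -/
noncomputable def stdGaussianQuantile (y : ℝ) : ℝ :=
  sInf {x : ℝ | y ≤ stdGaussianCDF x}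

/-- A finite family of random variables is jointly Gaussian if every linear
combination is Gaussian. -/
def IsJointGaussian {Ω : Type*} [MeasureSpace Ω] {ι : Type*} [Fintype ι]
    (X : ι → Ω → ℝ) : Prop :=
  ∀ c : ι → ℝ, ∃ m : ℝ, ∃ v : NNReal,
    MeasureTheory.Measure.map (fun ω => ∑ i, c i * X i ω) ℙ =
      ProbabilityTheory.gaussianReal m v

/-- The covariance of two real random variables. -/
noncomputable def covar {Ω : Type*} [MeasureSpace Ω] (X Y : Ω → ℝ) : ℝ :=
  (∫ ω, X ω * Y ω ∂ℙ) - (∫ ω, X ω ∂ℙ) * (∫ ω, Y ω ∂ℙ)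

section Stein

variable {μ : ℝ} {v : NNReal}

lemma hasDerivAt_gaussianPDFReal (μ : ℝ) {v : NNReal} (hv : v ≠ 0) (x : ℝ) :
    HasDerivAt (gaussianPDFReal μ v) (-((x - μ) / v) * gaussianPDFReal μ v x) x := by
  have hexponent : HasDerivAt (fun y ↦ -(y - μ) ^ 2 / (2 * v)) (-((x - μ) / v)) x := by
    have hv' : (v : ℝ) ≠ 0 := by exact_mod_cast hv
    refine ((((hasDerivAt_id x).sub_const μ).pow 2).neg.div_const (2 * (v : ℝ))).congr_deriv ?_
    simp only [id_eq]
    field_simp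
    ring
  refine (hexponent.exp.const_mul (Real.sqrt (2 * Real.pi * v))⁻¹).congr_deriv ?_
  rw [gaussianPDFReal]
  ring

lemma integrable_gaussianReal_iff (hv : v ≠ 0) {f : ℝ → ℝ} :
    Integrable f (gaussianReal μ v) ↔ Integrable fun x ↦ f x * gaussianPDFReal μ v x := by
  rw [gaussianReal_of_var_ne_zero μ hv, integrable_withDensity_iff (measurable_gaussianPDF μ v)
    (ae_of_all _ fun _ ↦ gaussianPDF_lt_top)]
  simp only [toReal_gaussianPDF]

theorem integral_sub_mean_mul_gaussianReal {h h' : ℝ → ℝ} (hderiv : ∀ x, HasDerivAt h (h' x) x)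
    (hint : Integrable h (gaussianReal μ v))
    (hint_mul : Integrable (fun x ↦ (x - μ) * h x) (gaussianReal μ v))
    (hint_deriv : Integrable h' (gaussianReal μ v)) :
    ∫ x, (x - μ) * h x ∂gaussianReal μ v = v * ∫ x, h' x ∂gaussianReal μ v := by
  rcases eq_or_ne v 0 with rfl | hv
  · simp
  have hv' : (v : ℝ) ≠ 0 := by exact_mod_cast hv
  rw [integrable_gaussianReal_iff hv] at hint hint_mul hint_deriv
  have hparts := integral_mul_deriv_eq_deriv_mul_of_integrable (fun x _ ↦ hderiv x)
    (fun x _ ↦ hasDerivAt_gaussianPDFReal μ hv x)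
    ((hint_mul.const_mul (-(v : ℝ)⁻¹)).congr (ae_of_all _ fun x ↦ by simp; ring)) hint_deriv hint
  simp only [integral_gaussianReal_eq_integral_smul hv, smul_eq_mul]
  calc ∫ x, gaussianPDFReal μ v x * ((x - μ) * h x)
      = -v * ∫ x, h x * (-((x - μ) / v) * gaussianPDFReal μ v x) := by
        rw [← integral_const_mul]
        congr with x
        field_simp
    _ = v * ∫ x, gaussianPDFReal μ v x * h' x := by
        rw [hparts, neg_mul_neg]
        simp only [mul_comm]

end Stein

section GaussianIntegrationByParts

variable {Ω E : Type*} [MeasurableSpace Ω] {P : Measure Ω} [NormedAddCommGroup E] [NormedSpace ℝ E]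
  [MeasurableSpace E] [BorelSpace E] [SecondCountableTopology E]
  {Y : Ω → ℝ} {X : Ω → E} {c : E} {F : E → ℝ}

lemma integral_sub_mean_mul_prod_gaussianReal {𝓩 : Type*} [MeasurableSpace 𝓩] {ν : Measure 𝓩}
    [SFinite ν] {μ : ℝ} {v : NNReal} {G G' : 𝓩 × ℝ → ℝ}
    (hderiv : ∀ z y, HasDerivAt (fun t ↦ G (z, t)) (G' (z, y)) y)
    (hint : Integrable G (ν.prod (gaussianReal μ v)))
    (hint_mul : Integrable (fun p ↦ (p.2 - μ) * G p) (ν.prod (gaussianReal μ v)))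
    (hint_deriv : Integrable G' (ν.prod (gaussianReal μ v))) :
    ∫ p, (p.2 - μ) * G p ∂ν.prod (gaussianReal μ v) =
      v * ∫ p, G' p ∂ν.prod (gaussianReal μ v) := by
  rw [integral_prod _ hint_mul, integral_prod _ hint_deriv, ← integral_const_mul]
  refine integral_congr_ae ?_
  filter_upwards [hint.prod_right_ae, hint_mul.prod_right_ae, hint_deriv.prod_right_ae]
    with z hz hz_mul hz_deriv
  exact integral_sub_mean_mul_gaussianReal (hderiv z) hz hz_mul hz_deriv

lemma integral_sub_mean_mul_comp_of_indepFun {Z : Ω → E} {μ : ℝ} {v : NNReal}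
    (hY : HasLaw Y (gaussianReal μ v) P) (hZ : AEMeasurable Z P) (hZY : IndepFun Z Y P) (b : E)
    (hF : Differentiable ℝ F) (hint : Integrable (fun ω ↦ F (Z ω + Y ω • b)) P)
    (hint_mul : Integrable (fun ω ↦ (Y ω - μ) * F (Z ω + Y ω • b)) P)
    (hint_deriv : Integrable (fun ω ↦ fderiv ℝ F (Z ω + Y ω • b) b) P) :
    ∫ ω, (Y ω - μ) * F (Z ω + Y ω • b) ∂P = v * ∫ ω, fderiv ℝ F (Z ω + Y ω • b) b ∂P := by
  have hprob := hY.isProbabilityMeasure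
  have hlaw : HasLaw (fun ω ↦ (Z ω, Y ω)) ((P.map Z).prod (gaussianReal μ v)) P :=
    hZY.hasLaw_prod ⟨hZ, rfl⟩ hY
  have transfer {G : E × ℝ → ℝ} (hG : Measurable G) : P[fun ω ↦ G (Z ω, Y ω)] =
      ∫ p, G p ∂(P.map Z).prod (gaussianReal μ v) := hlaw.integral_comp hG.aestronglyMeasurable
  have transfer_integrable {G : E × ℝ → ℝ} (hG : Measurable G)
      (h : Integrable (fun ω ↦ G (Z ω, Y ω)) P) :
      Integrable G ((P.map Z).prod (gaussianReal μ v)) := by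
    rw [← hlaw.map_eq]
    exact (integrable_map_measure hG.aestronglyMeasurable hlaw.aemeasurable).2 h
  have hpath : Measurable fun p : E × ℝ ↦ p.1 + p.2 • b := by fun_prop
  have hFm := hF.continuous.measurable.comp hpath
  have hF'm := (measurable_fderiv_apply_const ℝ F b).comp hpath
  have hmul : Measurable fun p : E × ℝ ↦ (p.2 - μ) * F (p.1 + p.2 • b) :=
    (measurable_snd.sub_const μ).mul hFm
  refine (transfer hmul).trans (Eq.trans ?_ (congrArg ((v : ℝ) * ·) (transfer hF'm).symm))
  refine integral_sub_mean_mul_prod_gaussianReal (fun z y ↦ ?_) (transfer_integrable hFm hint)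
    (transfer_integrable hmul hint_mul) (transfer_integrable hF'm hint_deriv)
  have hline : HasDerivAt (fun t : ℝ ↦ z + t • b) b y := by
    simpa using ((hasDerivAt_id y).smul_const b).const_add z
  exact (hF _).hasFDerivAt.comp_hasDerivAt y hline

variable [CompleteSpace E]

lemma indepFun_sub_smul_of_covariance (hYX : HasGaussianLaw (fun ω ↦ (Y ω, X ω)) P)
    (hc : ∀ L : StrongDual ℝ E, cov[Y, fun ω ↦ L (X ω); P] = L c) (hY : Var[Y; P] ≠ 0) :
    IndepFun (fun ω ↦ X ω - Y ω • (Var[Y; P]⁻¹ • c)) Y P := by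
  have hprob := hYX.isProbabilityMeasure
  set b := Var[Y; P]⁻¹ • c with hb
  let T : ℝ × E →L[ℝ] E × ℝ :=
    (ContinuousLinearMap.snd ℝ ℝ E - (ContinuousLinearMap.fst ℝ ℝ E).smulRight b).prod
      (ContinuousLinearMap.fst ℝ ℝ E)
  have hpair : HasGaussianLaw (fun ω ↦ (X ω - Y ω • b, Y ω)) P := hYX.map_fun T
  refine hpair.indepFun_of_covariance_strongDual fun L K ↦ ?_
  have hYL : MemLp Y 2 P := hYX.fst.memLp_two
  have hXL : MemLp (fun ω ↦ L (X ω)) 2 P := (hYX.snd.map_fun L).memLp_two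
  have hK : K ∘ Y = fun ω ↦ K 1 * Y ω := by
    ext ω
    rw [Function.comp_apply, ← mul_one (Y ω), ← smul_eq_mul, map_smul, smul_eq_mul, smul_eq_mul]
    ring
  have hL : (L ∘ fun ω ↦ X ω - Y ω • b) = fun ω ↦ L (X ω) - L b * Y ω := by
    ext ω
    simp [mul_comm]
  rw [hK, hL, covariance_const_mul_right, covariance_fun_sub_left hXL (hYL.const_mul _) hYL,
    covariance_const_mul_left, covariance_comm, hc, covariance_self hYL.aemeasurable, hb,
    map_smul, smul_eq_mul]
  field_simp
  ring

theorem integral_sub_mean_mul_comp (hYX : HasGaussianLaw (fun ω ↦ (Y ω, X ω)) P)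
    (hc : ∀ L : StrongDual ℝ E, cov[Y, fun ω ↦ L (X ω); P] = L c) (hF : Differentiable ℝ F)
    (hint : Integrable (fun ω ↦ F (X ω)) P)
    (hint_mul : Integrable (fun ω ↦ (Y ω - P[Y]) * F (X ω)) P)
    (hint_deriv : Integrable (fun ω ↦ fderiv ℝ F (X ω) c) P) :
    ∫ ω, (Y ω - P[Y]) * F (X ω) ∂P = ∫ ω, fderiv ℝ F (X ω) c ∂P := by
  have hprob := hYX.isProbabilityMeasure
  have hY := hYX.fst
  by_cases hvar : Var[Y; P] = 0
  · have hconst := ae_eq_integral_of_variance_eq_zero hY.memLp_two hvar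
    have hzero (G : Ω → ℝ) : ∫ ω, (Y ω - P[Y]) * G ω ∂P = 0 :=
      integral_eq_zero_of_ae (hconst.mono fun ω hω ↦ by simp [hω])
    have hc_zero : c = 0 :=
      SeparatingDual.eq_zero_of_forall_dual_eq_zero (R := ℝ) fun L ↦ (hc L).symm.trans (hzero _)
    simp only [hzero, hc_zero, map_zero, integral_zero]
  set b := Var[Y; P]⁻¹ • c with hb
  have hlaw : HasLaw Y (gaussianReal P[Y] Var[Y; P].toNNReal) P :=
    ⟨hY.aemeasurable, hY.map_eq_gaussianReal⟩
  have key := integral_sub_mean_mul_comp_of_indepFun (Z := fun ω ↦ X ω - Y ω • b)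
    (F := F) hlaw
    (hYX.snd.aemeasurable.sub (hY.aemeasurable.smul_const b))
    (indepFun_sub_smul_of_covariance hYX hc hvar) b hF
  simp only [sub_add_cancel, hb, map_smul, smul_eq_mul, integral_const_mul,
    Real.coe_toNNReal _ (variance_nonneg Y P), mul_inv_cancel_left₀ hvar] at key
  exact key hint hint_mul (hint_deriv.const_mul _)

end GaussianIntegrationByParts

section LogSumExp

variable {ι : Type*} [Fintype ι]

/-- The smooth approximation `log ∑ i, exp (x i)` of the maximum of `x`. -/
noncomputable def logSumExp (x : ι → ℝ) : ℝ :=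
  Real.log (∑ i, Real.exp (x i))

/-- The Gibbs weights of `x`, the gradient of `logSumExp`. -/
noncomputable def softmax (x : ι → ℝ) (i : ι) : ℝ :=
  Real.exp (x i) / ∑ j, Real.exp (x j)

lemma softmax_nonneg (x : ι → ℝ) (i : ι) : 0 ≤ softmax x i := by
  unfold softmax
  positivity

lemma sum_exp_pos [Nonempty ι] (x : ι → ℝ) : 0 < ∑ i, Real.exp (x i) :=
  Finset.sum_pos (fun _ _ ↦ Real.exp_pos _) Finset.univ_nonempty

lemma sum_softmax [Nonempty ι] (x : ι → ℝ) : ∑ i, softmax x i = 1 := by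
  simp only [softmax, ← Finset.sum_div]
  exact div_self (sum_exp_pos x).ne'

lemma softmax_eq_exp_sub_logSumExp [Nonempty ι] (x : ι → ℝ) (i : ι) :
    softmax x i = Real.exp (x i - logSumExp x) := by
  rw [Real.exp_sub, logSumExp, Real.exp_log (sum_exp_pos x), softmax]

lemma softmax_le_one [Nonempty ι] (x : ι → ℝ) (i : ι) : softmax x i ≤ 1 :=
  (Finset.single_le_sum (fun j _ ↦ softmax_nonneg x j) (Finset.mem_univ i)).trans_eq (sum_softmax x)

lemma hasFDerivAt_logSumExp [Nonempty ι] (x : ι → ℝ) :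
    HasFDerivAt logSumExp
      (∑ i, softmax x i • ContinuousLinearMap.proj (R := ℝ) (φ := fun _ : ι ↦ ℝ) i) x := by
  refine ((HasFDerivAt.fun_sum fun i _ ↦ (hasFDerivAt_apply i x).exp).log
    (sum_exp_pos x).ne').congr_fderiv ?_
  simp only [Finset.smul_sum, smul_smul, softmax, div_eq_inv_mul]

lemma hasFDerivAt_softmax [Nonempty ι] (x : ι → ℝ) (i : ι) :
    HasFDerivAt (fun y ↦ softmax y i)
      (softmax x i • (ContinuousLinearMap.proj (R := ℝ) (φ := fun _ : ι ↦ ℝ) i -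
        ∑ j, softmax x j • ContinuousLinearMap.proj (R := ℝ) (φ := fun _ : ι ↦ ℝ) j)) x := by
  simp only [softmax_eq_exp_sub_logSumExp _ i]
  exact ((hasFDerivAt_apply i x).sub (hasFDerivAt_logSumExp x)).exp

lemma iSup_le_logSumExp [Nonempty ι] (x : ι → ℝ) : ⨆ i, x i ≤ logSumExp x :=
  ciSup_le fun i ↦ (Real.le_log_iff_exp_le (sum_exp_pos x)).2
    (Finset.single_le_sum (fun j _ ↦ (Real.exp_pos (x j)).le) (Finset.mem_univ i))

lemma logSumExp_le_iSup_add_log_card [Nonempty ι] (x : ι → ℝ) :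
    logSumExp x ≤ (⨆ i, x i) + Real.log (Fintype.card ι) := by
  have hcard : (0 : ℝ) < Fintype.card ι := by exact_mod_cast Fintype.card_pos
  rw [logSumExp, Real.log_le_iff_le_exp (sum_exp_pos x), Real.exp_add, Real.exp_log hcard,
    mul_comm, ← nsmul_eq_mul]
  exact Finset.sum_le_card_nsmul _ _ _ fun i _ ↦
    Real.exp_le_exp.2 (le_ciSup (Set.finite_range x).bddAbove i)

lemma abs_iSup_le_norm [Nonempty ι] (x : ι → ℝ) : |⨆ i, x i| ≤ ‖x‖ := by
  obtain ⟨i, hi⟩ := exists_eq_ciSup_of_finite (f := x)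
  exact hi ▸ norm_le_pi_norm x i

variable {Ω : Type*} [MeasurableSpace Ω] {P : Measure Ω} {X : Ω → ι → ℝ}

lemma integrable_iSup [Nonempty ι] (hX : Integrable X P) : Integrable (fun ω ↦ ⨆ i, X ω i) P :=
  hX.norm.mono' (by
    have : Measurable fun x : ι → ℝ ↦ ⨆ i, x i := .iSup measurable_pi_apply
    exact (this.comp_aemeasurable hX.aemeasurable).aestronglyMeasurable)
    (ae_of_all _ fun ω ↦ abs_iSup_le_norm (X ω))

lemma integrable_logSumExp [Nonempty ι] [IsFiniteMeasure P] (hX : Integrable X P) :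
    Integrable (fun ω ↦ logSumExp (X ω)) P := by
  have hcont : Continuous (logSumExp : (ι → ℝ) → ℝ) :=
    continuous_iff_continuousAt.2 fun x ↦ (hasFDerivAt_logSumExp x).continuousAt
  exact integrable_of_le_of_le (hcont.comp_aestronglyMeasurable hX.aestronglyMeasurable)
    (ae_of_all _ fun ω ↦ iSup_le_logSumExp (X ω))
    (ae_of_all _ fun ω ↦ logSumExp_le_iSup_add_log_card (X ω))
    (integrable_iSup hX) ((integrable_iSup hX).add (integrable_const _))

end LogSumExp

/-- The sum is the Hessian of `logSumExp` contracted with `K`, which only sees increments of `K`. -/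
lemma sum_sub_sum_mul_mul_nonpos {ι : Type*} [Fintype ι] {s : ι → ℝ} {K : ι → ι → ℝ}
    (hs_nonneg : ∀ i, 0 ≤ s i) (hs_sum : ∑ i, s i = 1)
    (hK : ∀ i j, K i i + K j j ≤ K i j + K j i) :
    ∑ i, (K i i - ∑ j, K i j * s j) * s i ≤ 0 := by
  have hexpand : ∑ i, (K i i - ∑ j, K i j * s j) * s i =
      ∑ i, ∑ j, (K i i - K i j) * (s j * s i) := by
    refine Finset.sum_congr rfl fun i _ ↦ ?_
    simp only [← mul_assoc, ← Finset.sum_mul, sub_mul, Finset.sum_sub_distrib, ← Finset.mul_sum,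
      hs_sum, mul_one]
  have hswap : ∑ i, ∑ j, (K i i - K i j) * (s j * s i) =
      ∑ i, ∑ j, (K j j - K j i) * (s j * s i) := by
    rw [Finset.sum_comm]
    simp only [mul_comm (s _) (s _)]
  have hsymm : ∑ i, ∑ j, (K i i - K i j) * (s j * s i) +
      ∑ i, ∑ j, (K j j - K j i) * (s j * s i) ≤ 0 := by
    simp only [← Finset.sum_add_distrib, ← add_mul]
    refine Finset.sum_nonpos fun i _ ↦ Finset.sum_nonpos fun j _ ↦ ?_
    exact mul_nonpos_of_nonpos_of_nonneg (by linarith [hK i j])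
      (mul_nonneg (hs_nonneg j) (hs_nonneg i))
  linarith

section SoftmaxIntegrationByParts

variable {Ω ι : Type*} [MeasurableSpace Ω] {P : Measure Ω} [Fintype ι] {Y : Ω → ℝ} {X : Ω → ι → ℝ}

lemma covariance_strongDual_comp [IsFiniteMeasure P] (hY : MemLp Y 2 P) (hX : MemLp X 2 P)
    (L : StrongDual ℝ (ι → ℝ)) :
    cov[Y, fun ω ↦ L (X ω); P] = L fun i ↦ cov[Y, fun ω ↦ X ω i; P] := by
  classical
  have hL (x : ι → ℝ) : L x = ∑ i, x i * L fun j ↦ if i = j then 1 else 0 :=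
    L.toLinearMap.pi_apply_eq_sum_univ x
  simp only [hL (X _), hL fun i ↦ cov[Y, fun ω ↦ X ω i; P]]
  rw [covariance_fun_sum_right (fun i ↦ (memLp_pi_iff.1 hX i).mul_const _) hY]
  simp only [covariance_mul_const_right]

lemma measurable_softmax (i : ι) : Measurable fun x : ι → ℝ ↦ softmax x i := by
  unfold softmax
  fun_prop

lemma integrable_mul_softmax [Nonempty ι] (hY : Integrable Y P) (hX : AEMeasurable X P) (i : ι) :
    Integrable (fun ω ↦ Y ω * softmax (X ω) i) P :=
  hY.mul_bdd (c := 1) ((measurable_softmax i).comp_aemeasurable hX).aestronglyMeasurable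
    (ae_of_all _ fun ω ↦ by
      rw [Real.norm_of_nonneg (softmax_nonneg _ _)]
      exact softmax_le_one _ _)

lemma integrable_sub_sum_mul_mul_softmax [Nonempty ι] [IsFiniteMeasure P] (hX : AEMeasurable X P)
    (c : ι → ℝ) (i : ι) :
    Integrable (fun ω ↦ (c i - ∑ j, c j * softmax (X ω) j) * softmax (X ω) i) P :=
  integrable_mul_softmax ((integrable_const _).sub (integrable_finsetSum _ fun j _ ↦
    integrable_mul_softmax (integrable_const _) hX j)) hX i

lemma integral_sub_mean_mul_softmax [Nonempty ι] (hYX : HasGaussianLaw (fun ω ↦ (Y ω, X ω)) P)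
    (i : ι) :
    ∫ ω, (Y ω - P[Y]) * softmax (X ω) i ∂P =
      ∫ ω, (cov[Y, fun ω' ↦ X ω' i; P] -
        ∑ j, cov[Y, fun ω' ↦ X ω' j; P] * softmax (X ω) j) * softmax (X ω) i ∂P := by
  have hprob := hYX.isProbabilityMeasure
  have hX := hYX.snd.aemeasurable
  have hfderiv (x c : ι → ℝ) : fderiv ℝ (fun y ↦ softmax y i) x c =
      (c i - ∑ j, c j * softmax x j) * softmax x i := by
    simp [(hasFDerivAt_softmax x i).fderiv, mul_comm]
  rw [integral_sub_mean_mul_comp hYX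
    (covariance_strongDual_comp hYX.fst.memLp_two hYX.snd.memLp_two)
    (fun x ↦ (hasFDerivAt_softmax x i).differentiableAt)
    (by simpa using integrable_mul_softmax (integrable_const 1) hX i)
    (integrable_mul_softmax (hYX.fst.integrable.sub (integrable_const _)) hX i)]
  · simp only [hfderiv]
  · simp only [hfderiv]
    exact integrable_sub_sum_mul_mul_softmax hX (fun j ↦ cov[Y, fun ω ↦ X ω j; P]) i

lemma integral_sum_mul_softmax_nonpos [Nonempty ι] {V : Ω → ι → ℝ}
    (hVX : ∀ i, HasGaussianLaw (fun ω ↦ (V ω i, X ω)) P) (hV_mean : ∀ i, ∫ ω, V ω i ∂P = 0)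
    (hcov : ∀ i j,
      cov[fun ω ↦ V ω i, fun ω ↦ X ω i; P] + cov[fun ω ↦ V ω j, fun ω ↦ X ω j; P] ≤
        cov[fun ω ↦ V ω i, fun ω ↦ X ω j; P] + cov[fun ω ↦ V ω j, fun ω ↦ X ω i; P]) :
    ∫ ω, ∑ i, V ω i * softmax (X ω) i ∂P ≤ 0 := by
  have hprob := (hVX (Classical.arbitrary ι)).isProbabilityMeasure
  have hX := (hVX (Classical.arbitrary ι)).snd.aemeasurable
  have hparts (i : ι) := integral_sub_mean_mul_softmax (hVX i) i
  simp only [hV_mean, sub_zero] at hparts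
  rw [integral_finsetSum _ fun i _ ↦ integrable_mul_softmax (hVX i).fst.integrable hX i,
    Finset.sum_congr rfl fun i _ ↦ hparts i,
    ← integral_finsetSum _ fun i _ ↦ integrable_sub_sum_mul_mul_softmax hX
      (fun j ↦ cov[fun ω ↦ V ω i, fun ω ↦ X ω j; P]) i]
  exact integral_nonpos fun ω ↦ sum_sub_sum_mul_mul_nonpos
    (K := fun i j ↦ cov[fun ω ↦ V ω i, fun ω ↦ X ω j; P])
    (softmax_nonneg (X ω)) (sum_softmax (X ω)) hcov

end SoftmaxIntegrationByParts

section Interpolation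

variable {Ω ι : Type*} {X Y : Ω → ι → ℝ}

/-- The circular interpolation `cos θ • X + sin θ • Y` from `X` at `0` to `Y` at `π / 2`; its
`θ`-derivative is its value at `θ + π / 2`. -/
noncomputable def circularInterp (X Y : Ω → ι → ℝ) (θ : ℝ) (ω : Ω) : ι → ℝ :=
  Real.cos θ • X ω + Real.sin θ • Y ω

lemma circularInterp_apply (X Y : Ω → ι → ℝ) (θ : ℝ) (ω : Ω) (i : ι) :
    circularInterp X Y θ ω i = Real.cos θ * X ω i + Real.sin θ * Y ω i := rfl

lemma hasDerivAt_circularInterp [Finite ι] (X Y : Ω → ι → ℝ) (ω : Ω) (θ : ℝ) :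
    HasDerivAt (fun t ↦ circularInterp X Y t ω) (circularInterp X Y (θ + Real.pi / 2) ω) θ := by
  cases nonempty_fintype ι
  refine (((Real.hasDerivAt_cos θ).smul_const (X ω)).add
    ((Real.hasDerivAt_sin θ).smul_const (Y ω))).congr_deriv ?_
  simp only [circularInterp, Real.cos_add_pi_div_two, Real.sin_add_pi_div_two]

lemma abs_circularInterp_le (X Y : Ω → ι → ℝ) (θ : ℝ) (ω : Ω) (i : ι) :
    |circularInterp X Y θ ω i| ≤ |X ω i| + |Y ω i| := by
  rw [circularInterp_apply]
  refine (abs_add_le _ _).trans (add_le_add ?_ ?_) <;> rw [abs_mul]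
  · exact mul_le_of_le_one_left (abs_nonneg _) (Real.abs_cos_le_one θ)
  · exact mul_le_of_le_one_left (abs_nonneg _) (Real.abs_sin_le_one θ)

variable [MeasurableSpace Ω] {P : Measure Ω}

lemma covariance_circularInterp [IsProbabilityMeasure P] (hX : ∀ i, MemLp (fun ω ↦ X ω i) 2 P)
    (hY : ∀ i, MemLp (fun ω ↦ Y ω i) 2 P) (hXY : IndepFun X Y P) (θ θ' : ℝ) (i j : ι) :
    cov[fun ω ↦ circularInterp X Y θ' ω i, fun ω ↦ circularInterp X Y θ ω j; P] =
      Real.cos θ' * Real.cos θ * cov[fun ω ↦ X ω i, fun ω ↦ X ω j; P] +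
        Real.sin θ' * Real.sin θ * cov[fun ω ↦ Y ω i, fun ω ↦ Y ω j; P] := by
  have hXL (k : ι) (a : ℝ) : MemLp (fun ω ↦ a * X ω k) 2 P := (hX k).const_mul a
  have hYL (k : ι) (a : ℝ) : MemLp (fun ω ↦ a * Y ω k) 2 P := (hY k).const_mul a
  have hcross (k l : ι) : cov[fun ω ↦ X ω k, fun ω ↦ Y ω l; P] = 0 :=
    (hXY.comp (measurable_pi_apply k) (measurable_pi_apply l)).covariance_eq_zero
      (hX k) (hY l)
  have hsplit (t : ℝ) (k : ι) : (fun ω ↦ circularInterp X Y t ω k) =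
      (fun ω ↦ Real.cos t * X ω k) + fun ω ↦ Real.sin t * Y ω k := rfl
  rw [hsplit, hsplit, covariance_add_left (hXL _ _) (hYL _ _) ((hXL _ _).add (hYL _ _)),
    covariance_add_right (hXL _ _) (hXL _ _) (hYL _ _),
    covariance_add_right (hYL _ _) (hXL _ _) (hYL _ _)]
  simp only [covariance_const_mul_left, covariance_const_mul_right, hcross,
    covariance_comm (fun ω ↦ Y ω _) (fun ω ↦ X ω _)]
  ring

lemma hasGaussianLaw_circularInterp [Finite ι] (hX : HasGaussianLaw X P) (hY : HasGaussianLaw Y P)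
    (hXY : IndepFun X Y P) (θ θ' : ℝ) (i : ι) :
    HasGaussianLaw (fun ω ↦ (circularInterp X Y θ' ω i, circularInterp X Y θ ω)) P := by
  cases nonempty_fintype ι
  let V (t : ℝ) : (ι → ℝ) × (ι → ℝ) →L[ℝ] ι → ℝ :=
    Real.cos t • ContinuousLinearMap.fst ℝ _ _ + Real.sin t • ContinuousLinearMap.snd ℝ _ _
  exact (hXY.hasGaussianLaw hX hY).map_fun
    (((ContinuousLinearMap.proj (φ := fun _ : ι ↦ ℝ) i).comp (V θ')).prod (V θ))

variable [Fintype ι]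

lemma hasDerivAt_integral_logSumExp_circularInterp [Nonempty ι] [IsFiniteMeasure P]
    (hX : Integrable X P) (hY : Integrable Y P) (θ : ℝ) :
    HasDerivAt (fun t ↦ ∫ ω, logSumExp (circularInterp X Y t ω) ∂P)
      (∫ ω, ∑ i, circularInterp X Y (θ + Real.pi / 2) ω i * softmax (circularInterp X Y θ ω) i ∂P)
      θ := by
  have hint (t : ℝ) : Integrable (circularInterp X Y t) P :=
    (hX.smul (Real.cos t)).add (hY.smul (Real.sin t))
  have hcoord {Z : Ω → ι → ℝ} (hZ : Integrable Z P) (i : ι) : Integrable (fun ω ↦ Z ω i) P :=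
    hZ.eval i
  refine (hasDerivAt_integral_of_dominated_loc_of_deriv_le
    (F' := fun t ω ↦ ∑ i, circularInterp X Y (t + Real.pi / 2) ω i *
      softmax (circularInterp X Y t ω) i)
    (bound := fun ω ↦ ∑ i, (|X ω i| + |Y ω i|)) Filter.univ_mem
    (Eventually.of_forall fun t ↦ (integrable_logSumExp (hint t)).aestronglyMeasurable)
    (integrable_logSumExp (hint θ)) ?_ ?_ ?_ ?_).2
  · refine Finset.aestronglyMeasurable_fun_sum _ fun i _ ↦
      (hcoord (hint _) i).aestronglyMeasurable.mul ?_
    exact ((measurable_softmax i).comp_aemeasurable (hint θ).aemeasurable).aestronglyMeasurable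
  · refine ae_of_all _ fun ω t _ ↦ (norm_sum_le _ _).trans (Finset.sum_le_sum fun i _ ↦ ?_)
    rw [norm_mul, Real.norm_of_nonneg (softmax_nonneg _ i)]
    exact (mul_le_of_le_one_right (norm_nonneg _) (softmax_le_one _ i)).trans
      (abs_circularInterp_le X Y _ ω i)
  · exact integrable_finsetSum _ fun i _ ↦ (hcoord hX i).abs.add (hcoord hY i).abs
  · refine ae_of_all _ fun ω t _ ↦ ?_
    have hchain := (hasFDerivAt_logSumExp (circularInterp X Y t ω)).comp_hasDerivAt t
      (hasDerivAt_circularInterp X Y ω t)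
    exact hchain.congr_deriv (by simp [mul_comm])

lemma deriv_integral_logSumExp_circularInterp_nonpos [Nonempty ι] (hX : HasGaussianLaw X P)
    (hY : HasGaussianLaw Y P) (hXY : IndepFun X Y P) (hX_mean : ∀ i, ∫ ω, X ω i ∂P = 0)
    (hY_mean : ∀ i, ∫ ω, Y ω i ∂P = 0)
    (hvar : ∀ i j, Var[fun ω ↦ Y ω i - Y ω j; P] ≤ Var[fun ω ↦ X ω i - X ω j; P])
    {θ : ℝ} (hθ : θ ∈ Set.Icc 0 (Real.pi / 2)) :
    ∫ ω, ∑ i, circularInterp X Y (θ + Real.pi / 2) ω i * softmax (circularInterp X Y θ ω) i ∂P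
      ≤ 0 := by
  have hprob := hX.isProbabilityMeasure
  have hX2 (i : ι) := (hX.eval i).memLp_two
  have hY2 (i : ι) := (hY.eval i).memLp_two
  refine integral_sum_mul_softmax_nonpos
    (fun i ↦ hasGaussianLaw_circularInterp hX hY hXY θ _ i) (fun i ↦ ?_) fun i j ↦ ?_
  · simp only [circularInterp_apply]
    rw [integral_add ((hX.eval i).integrable.const_mul _) ((hY.eval i).integrable.const_mul _),
      integral_const_mul, integral_const_mul, hX_mean, hY_mean]
    simp
  have hcos : 0 ≤ Real.cos θ := Real.cos_nonneg_of_mem_Icc ⟨by linarith [hθ.1, Real.pi_pos], hθ.2⟩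
  have hsin : 0 ≤ Real.sin θ := Real.sin_nonneg_of_mem_Icc ⟨hθ.1, by linarith [hθ.2, Real.pi_pos]⟩
  simp only [covariance_circularInterp hX2 hY2 hXY, Real.cos_add_pi_div_two,
    Real.sin_add_pi_div_two]
  have hij := hvar i j
  rw [variance_fun_sub (hY2 i) (hY2 j), variance_fun_sub (hX2 i) (hX2 j)] at hij
  simp only [← covariance_self (hX2 _).aemeasurable, ← covariance_self (hY2 _).aemeasurable] at hij
  rw [covariance_comm (fun ω ↦ X ω j) (fun ω ↦ X ω i),
    covariance_comm (fun ω ↦ Y ω j) (fun ω ↦ Y ω i)]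
  linarith [mul_le_mul_of_nonneg_left hij (mul_nonneg hcos hsin)]

lemma integral_logSumExp_le_of_indepFun [Nonempty ι] (hX : HasGaussianLaw X P)
    (hY : HasGaussianLaw Y P) (hXY : IndepFun X Y P) (hX_mean : ∀ i, ∫ ω, X ω i ∂P = 0)
    (hY_mean : ∀ i, ∫ ω, Y ω i ∂P = 0)
    (hvar : ∀ i j, Var[fun ω ↦ Y ω i - Y ω j; P] ≤ Var[fun ω ↦ X ω i - X ω j; P]) :
    ∫ ω, logSumExp (Y ω) ∂P ≤ ∫ ω, logSumExp (X ω) ∂P := by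
  have hprob := hX.isProbabilityMeasure
  have hderiv (θ : ℝ) :=
    hasDerivAt_integral_logSumExp_circularInterp hX.integrable hY.integrable θ
  have hanti : AntitoneOn (fun θ ↦ ∫ ω, logSumExp (circularInterp X Y θ ω) ∂P)
      (Set.Icc 0 (Real.pi / 2)) :=
    antitoneOn_of_hasDerivWithinAt_nonpos (convex_Icc _ _)
      (fun θ _ ↦ (hderiv θ).continuousAt.continuousWithinAt)
      (fun θ _ ↦ (hderiv θ).hasDerivWithinAt) fun θ hθ ↦
        deriv_integral_logSumExp_circularInterp_nonpos hX hY hXY hX_mean hY_mean hvar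
          (interior_subset hθ)
  have hpi := Real.pi_div_two_pos.le
  simpa [circularInterp] using hanti (Set.left_mem_Icc.2 hpi) (Set.right_mem_Icc.2 hpi) hpi

end Interpolation

section SudakovFernique

variable {Ω Ω' ι : Type*} [MeasurableSpace Ω] [MeasurableSpace Ω'] {P : Measure Ω} {Q : Measure Ω'}
  [Finite ι] [Nonempty ι]

lemma integral_iSup_le_add_log_card_of_indepFun {ι : Type*} [Fintype ι] [Nonempty ι]
    {X Y : Ω → ι → ℝ} (hX : HasGaussianLaw X P) (hY : HasGaussianLaw Y P) (hXY : IndepFun X Y P)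
    (hX_mean : ∀ i, ∫ ω, X ω i ∂P = 0)
    (hY_mean : ∀ i, ∫ ω, Y ω i ∂P = 0)
    (hvar : ∀ i j, Var[fun ω ↦ X ω i - X ω j; P] ≤ Var[fun ω ↦ Y ω i - Y ω j; P]) :
    ∫ ω, ⨆ i, X ω i ∂P ≤ ∫ ω, ⨆ i, Y ω i ∂P + Real.log (Fintype.card ι) := by
  have hprob := hX.isProbabilityMeasure
  have hX_int := hX.integrable
  have hY_int := hY.integrable
  calc ∫ ω, ⨆ i, X ω i ∂P
    _ ≤ ∫ ω, logSumExp (X ω) ∂P :=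
        integral_mono (integrable_iSup hX_int) (integrable_logSumExp hX_int)
          fun ω ↦ iSup_le_logSumExp _
    _ ≤ ∫ ω, logSumExp (Y ω) ∂P :=
        integral_logSumExp_le_of_indepFun hY hX hXY.symm hY_mean hX_mean hvar
    _ ≤ ∫ ω, ((⨆ i, Y ω i) + Real.log (Fintype.card ι)) ∂P :=
        integral_mono (integrable_logSumExp hY_int)
          ((integrable_iSup hY_int).add (integrable_const _))
          fun ω ↦ logSumExp_le_iSup_add_log_card _
    _ = ∫ ω, ⨆ i, Y ω i ∂P + Real.log (Fintype.card ι) := by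
        rw [integral_add (integrable_iSup hY_int) (integrable_const _), integral_const,
          probReal_univ, one_smul]

lemma integral_iSup_le_of_indepFun {X Y : Ω → ι → ℝ} (hX : HasGaussianLaw X P)
    (hY : HasGaussianLaw Y P) (hXY : IndepFun X Y P) (hX_mean : ∀ i, ∫ ω, X ω i ∂P = 0)
    (hY_mean : ∀ i, ∫ ω, Y ω i ∂P = 0)
    (hvar : ∀ i j, Var[fun ω ↦ X ω i - X ω j; P] ≤ Var[fun ω ↦ Y ω i - Y ω j; P]) :
    ∫ ω, ⨆ i, X ω i ∂P ≤ ∫ ω, ⨆ i, Y ω i ∂P := by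
  cases nonempty_fintype ι
  -- Rescaling by `β → ∞` makes the additive error `log (card ι)` negligible.
  have hscaled {β : ℝ} (hβ : 0 < β) :
      β * ∫ ω, ⨆ i, X ω i ∂P ≤ β * ∫ ω, ⨆ i, Y ω i ∂P + Real.log (Fintype.card ι) := by
    have hle := integral_iSup_le_add_log_card_of_indepFun (hX.fun_smul β) (hY.fun_smul β)
      (hXY.comp (measurable_const_smul β) (measurable_const_smul β))
      (by simp [integral_const_mul, hX_mean]) (by simp [integral_const_mul, hY_mean]) fun i j ↦ by
        simp only [Pi.smul_apply, smul_eq_mul, ← mul_sub, variance_const_mul]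
        exact mul_le_mul_of_nonneg_left (hvar i j) (sq_nonneg β)
    simpa only [Pi.smul_apply, smul_eq_mul, ← Real.mul_iSup_of_nonneg hβ.le, integral_const_mul]
      using hle
  by_contra! hlt
  have hlog : 0 ≤ Real.log (Fintype.card ι) := Real.log_natCast_nonneg _
  have hgap := sub_pos.2 hlt
  have hβ := hscaled (div_pos (by linarith : 0 < Real.log (Fintype.card ι) + 1) hgap)
  rw [← sub_le_iff_le_add', ← mul_sub, div_mul_cancel₀ _ hgap.ne'] at hβ
  linarith

lemma hasGaussianLaw_comp_measurePreserving {E : Type*} [NormedAddCommGroup E] [NormedSpace ℝ E]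
    [MeasurableSpace E] {X : Ω → E} {T : Ω' → Ω} (hX : HasGaussianLaw X P)
    (hT : MeasurePreserving T Q P) : HasGaussianLaw (X ∘ T) Q :=
  haveI := hX.isGaussian_map
  (HasLaw.comp ⟨hX.aemeasurable, rfl⟩ hT.hasLaw).hasGaussianLaw

lemma variance_comp_measurePreserving {f : Ω → ℝ} {T : Ω' → Ω} (hf : AEMeasurable f P)
    (hT : MeasurePreserving T Q P) : Var[f ∘ T; Q] = Var[f; P] := by
  conv_rhs => rw [← hT.map_eq]
  exact (variance_map (hT.map_eq ▸ hf) hT.measurable.aemeasurable).symm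

theorem sudakov_fernique {X : Ω → ι → ℝ} {Y : Ω' → ι → ℝ} (hX : HasGaussianLaw X P)
    (hY : HasGaussianLaw Y Q) (hX_mean : ∀ i, ∫ ω, X ω i ∂P = 0) (hY_mean : ∀ i, ∫ ω, Y ω i ∂Q = 0)
    (hvar : ∀ i j, Var[fun ω ↦ X ω i - X ω j; P] ≤ Var[fun ω ↦ Y ω i - Y ω j; Q]) :
    ∫ ω, ⨆ i, X ω i ∂P ≤ ∫ ω, ⨆ i, Y ω i ∂Q := by
  cases nonempty_fintype ι
  have hP := hX.isProbabilityMeasure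
  have hQ := hY.isProbabilityMeasure
  have hfst := measurePreserving_fst (μ := P) (ν := Q)
  have hsnd := measurePreserving_snd (μ := P) (ν := Q)
  have hvar_fst (i j : ι) :
      Var[fun z ↦ X z.1 i - X z.1 j; P.prod Q] = Var[fun ω ↦ X ω i - X ω j; P] :=
    variance_comp_measurePreserving (f := fun ω ↦ X ω i - X ω j)
      ((hX.eval i).aemeasurable.sub (hX.eval j).aemeasurable) hfst
  have hvar_snd (i j : ι) :
      Var[fun z ↦ Y z.2 i - Y z.2 j; P.prod Q] = Var[fun ω ↦ Y ω i - Y ω j; Q] :=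
    variance_comp_measurePreserving (f := fun ω ↦ Y ω i - Y ω j)
      ((hY.eval i).aemeasurable.sub (hY.eval j).aemeasurable) hsnd
  have hle := integral_iSup_le_of_indepFun (hasGaussianLaw_comp_measurePreserving hX hfst)
    (hasGaussianLaw_comp_measurePreserving hY hsnd)
    (indepFun_prod₀ hX.aemeasurable hY.aemeasurable)
    (fun i ↦ by simp [integral_fun_fst (fun ω ↦ X ω i), hX_mean])
    (fun i ↦ by simp [integral_fun_snd (fun ω ↦ Y ω i), hY_mean])
    fun i j ↦ by simpa [hvar_fst, hvar_snd] using hvar i j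
  simpa [integral_fun_fst (fun ω ↦ ⨆ i, X ω i), integral_fun_snd (fun ω ↦ ⨆ i, Y ω i)] using hle

theorem sqrt_one_sub_mul_integral_iSup_le {X : Ω → ι → ℝ} {Z : Ω' → ι → ℝ} {τ : ℝ}
    (hX : HasGaussianLaw X P) (hX_mean : ∀ i, ∫ ω, X ω i ∂P = 0)
    (hX_var : ∀ i, Var[fun ω ↦ X ω i; P] = 1)
    (hX_cov : Pairwise fun i j ↦ cov[fun ω ↦ X ω i, fun ω ↦ X ω j; P] ≤ τ)
    (hZ_law : ∀ i, HasLaw (fun ω ↦ Z ω i) (gaussianReal 0 1) Q)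
    (hZ_indep : iIndepFun (fun i ω ↦ Z ω i) Q) (hτ : τ ≤ 1) :
    √(1 - τ) * ∫ ω, ⨆ i, Z ω i ∂Q ≤ ∫ ω, ⨆ i, X ω i ∂P := by
  cases nonempty_fintype ι
  have hP := hX.isProbabilityMeasure
  have hZ : HasGaussianLaw Z Q := hZ_indep.hasGaussianLaw fun i ↦ (hZ_law i).hasGaussianLaw
  have hQ := hZ.isProbabilityMeasure
  have hX_memLp (i : ι) := (hX.eval i).memLp_two
  have hZ_memLp (i : ι) := (hZ.eval i).memLp_two
  have hZ_mean (i : ι) : ∫ ω, Z ω i ∂Q = 0 := by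
    rw [(hZ_law i).integral_eq, integral_id_gaussianReal]
  have hZ_var (i : ι) : Var[fun ω ↦ Z ω i; Q] = 1 := by
    rw [(hZ_law i).variance_eq, variance_id_gaussianReal, NNReal.coe_one]
  have hle := sudakov_fernique (hZ.fun_smul √(1 - τ)) hX
    (by simp [integral_const_mul, hZ_mean]) hX_mean fun i j ↦ by
      rcases eq_or_ne i j with rfl | hij
      · simp only [sub_self]
        exact ((variance_zero Q).trans (variance_zero P).symm).le
      have hcov : cov[fun ω ↦ Z ω i, fun ω ↦ Z ω j; Q] = 0 :=
        (hZ_indep.indepFun hij).covariance_eq_zero (hZ_memLp i) (hZ_memLp j)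
      simp only [Pi.smul_apply, smul_eq_mul, ← mul_sub, variance_const_mul,
        variance_fun_sub (hZ_memLp i) (hZ_memLp j), variance_fun_sub (hX_memLp i) (hX_memLp j),
        hZ_var, hX_var, hcov, Real.sq_sqrt (sub_nonneg.2 hτ)]
      linarith [hX_cov hij]
  simpa only [Pi.smul_apply, smul_eq_mul, ← Real.mul_iSup_of_nonneg (Real.sqrt_nonneg _),
    integral_const_mul] using hle

end SudakovFernique

section StandardGaussianDistribution

lemma stdGaussianCDF_eq_measureReal_Iic (u : ℝ) :
    stdGaussianCDF u = (gaussianReal 0 1).real (Set.Iic u) := by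
  rw [measureReal_def, gaussianReal_apply_eq_integral _ one_ne_zero, ENNReal.toReal_ofReal
    (integral_nonneg fun x ↦ gaussianPDFReal_nonneg _ _ _)]
  simp [stdGaussianCDF, gaussianPDFReal, div_eq_inv_mul]

lemma stdGaussianCDF_eq_cdf : stdGaussianCDF = cdf (gaussianReal 0 1) := by
  ext u
  rw [stdGaussianCDF_eq_measureReal_Iic, cdf_eq_real]

lemma hasDerivAt_stdGaussianCDF (u : ℝ) :
    HasDerivAt stdGaussianCDF (gaussianPDFReal 0 1 u) u := by
  have hint : Integrable (gaussianPDFReal 0 1) := integrable_gaussianPDFReal 0 1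
  have hcont : Continuous (gaussianPDFReal 0 1) :=
    continuous_iff_continuousAt.2 fun x ↦
      (hasDerivAt_gaussianPDFReal 0 one_ne_zero x).continuousAt
  have hshift (v : ℝ) :
      stdGaussianCDF v = stdGaussianCDF 0 + ∫ x in (0 : ℝ)..v, gaussianPDFReal 0 1 x := by
    have hIic (w : ℝ) : stdGaussianCDF w = ∫ x in Set.Iic w, gaussianPDFReal 0 1 x := by
      simp [stdGaussianCDF, gaussianPDFReal, div_eq_inv_mul]
    rw [hIic, hIic, ← intervalIntegral.integral_Iic_sub_Iic hint.integrableOn hint.integrableOn,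
      add_sub_cancel]
  rw [funext hshift]
  exact (intervalIntegral.integral_hasDerivAt_right hint.intervalIntegrable
    (stronglyMeasurable_gaussianPDFReal 0 1).stronglyMeasurableAtFilter
    hcont.continuousAt).const_add _

lemma continuous_stdGaussianCDF : Continuous stdGaussianCDF :=
  continuous_iff_continuousAt.2 fun u ↦ (hasDerivAt_stdGaussianCDF u).continuousAt

lemma strictMono_stdGaussianCDF : StrictMono stdGaussianCDF :=
  strictMono_of_deriv_pos fun u ↦ by
    rw [(hasDerivAt_stdGaussianCDF u).deriv]
    exact gaussianPDFReal_pos _ _ _ one_ne_zero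

lemma concaveOn_stdGaussianCDF : ConcaveOn ℝ (Set.Ici 0) stdGaussianCDF := by
  refine AntitoneOn.concaveOn_of_deriv (convex_Ici 0) continuous_stdGaussianCDF.continuousOn
    (fun u _ ↦ (hasDerivAt_stdGaussianCDF u).differentiableAt.differentiableWithinAt) ?_
  rw [interior_Ici, funext fun u ↦ (hasDerivAt_stdGaussianCDF u).deriv]
  intro x hx y _ hxy
  have hx' : 0 ≤ x := le_of_lt hx
  simp only [gaussianPDFReal]
  gcongr

lemma stdGaussianCDF_sub_le_gaussianPDFReal_mul {u z : ℝ} (hu : 0 ≤ u) (hz : 0 ≤ z) :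
    stdGaussianCDF z - stdGaussianCDF u ≤ gaussianPDFReal 0 1 u * (z - u) := by
  rcases lt_trichotomy u z with huz | rfl | hzu
  · rw [← div_le_iff₀ (sub_pos.2 huz), ← slope_def_field]
    exact concaveOn_stdGaussianCDF.slope_le_of_hasDerivAt hu hz huz (hasDerivAt_stdGaussianCDF u)
  · simp
  · rw [← neg_le_neg_iff, ← mul_neg, neg_sub, neg_sub, ← le_div_iff₀ (sub_pos.2 hzu),
      ← slope_def_field]
    exact concaveOn_stdGaussianCDF.le_slope_of_hasDerivAt hz hu hzu (hasDerivAt_stdGaussianCDF u)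

lemma stdGaussianCDF_zero : stdGaussianCDF 0 = 1 / 2 := by
  have := nullSingletonClass_gaussianReal (μ := 0) one_ne_zero
  have hsymm : (gaussianReal 0 1).real (Set.Ioi 0) = (gaussianReal 0 1).real (Set.Iic 0) := calc
    (gaussianReal 0 1).real (Set.Ioi 0) = (gaussianReal 0 1).real (Set.Ici 0) :=
        measureReal_congr Ioi_ae_eq_Ici
    _ = (gaussianReal 0 1).real ((fun x ↦ -x) ⁻¹' Set.Iic 0) := by simp
    _ = (gaussianReal 0 1).real (Set.Iic 0) := by
        rw [← map_measureReal_apply measurable_neg measurableSet_Iic, gaussianReal_map_neg,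
          neg_zero]
  have hcompl := probReal_add_probReal_compl (μ := gaussianReal 0 1)
    (measurableSet_Iic (a := (0 : ℝ)))
  rw [Set.compl_Iic, hsymm, ← stdGaussianCDF_eq_measureReal_Iic] at hcompl
  linarith

lemma stdGaussianCDF_mem_Icc (u : ℝ) : stdGaussianCDF u ∈ Set.Icc 0 1 :=
  stdGaussianCDF_eq_cdf ▸ ⟨cdf_nonneg _ u, cdf_le_one _ u⟩

lemma stdGaussianQuantile_stdGaussianCDF (u : ℝ) :
    stdGaussianQuantile (stdGaussianCDF u) = u := by
  simp only [stdGaussianQuantile, strictMono_stdGaussianCDF.le_iff_le]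
  exact csInf_Ici

lemma stdGaussianCDF_stdGaussianQuantile {y : ℝ} (hy : y ∈ Set.Ioo 0 1) :
    stdGaussianCDF (stdGaussianQuantile y) = y := by
  obtain ⟨u, rfl⟩ : ∃ u, stdGaussianCDF u = y := mem_range_of_exists_le_of_exists_ge
    continuous_stdGaussianCDF
    (((stdGaussianCDF_eq_cdf ▸ tendsto_cdf_atBot _).eventually_le_const hy.1).exists)
    (((stdGaussianCDF_eq_cdf ▸ tendsto_cdf_atTop _).eventually_const_le hy.2).exists)
  rw [stdGaussianQuantile_stdGaussianCDF]

lemma stdGaussianQuantile_nonneg {y : ℝ} (hy : 1 / 2 ≤ y) : 0 ≤ stdGaussianQuantile y :=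
  Real.sInf_nonneg fun _ hx ↦
    strictMono_stdGaussianCDF.le_iff_le.1 (stdGaussianCDF_zero.trans_le (hy.trans hx))

-- The defining set is all of `ℝ`, whose `sInf` is the junk value `0`.
lemma stdGaussianQuantile_zero : stdGaussianQuantile 0 = 0 := by
  have hset : {x | 0 ≤ stdGaussianCDF x} = Set.univ :=
    Set.eq_univ_of_forall fun x ↦ (stdGaussianCDF_mem_Icc x).1
  rw [stdGaussianQuantile, hset, Real.sInf_univ]

lemma stdGaussianQuantile_one_sub_inv_natCast_nonneg {q : ℕ} (hq : q ≠ 0) :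
    0 ≤ stdGaussianQuantile (1 - 1 / q) := by
  obtain rfl | hq2 : q = 1 ∨ 2 ≤ q := by omega
  · simp [stdGaussianQuantile_zero]
  · have hq_inv : 1 / (q : ℝ) ≤ 1 / 2 := by gcongr; exact_mod_cast hq2
    exact stdGaussianQuantile_nonneg (by linarith)

lemma setIntegral_Iic_id_gaussianReal (t : ℝ) :
    ∫ x in Set.Iic t, x ∂gaussianReal 0 1 = -gaussianPDFReal 0 1 t := by
  have hderiv (x : ℝ) : HasDerivAt (gaussianPDFReal 0 1) (-(x * gaussianPDFReal 0 1 x)) x := by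
    simpa using hasDerivAt_gaussianPDFReal 0 one_ne_zero x
  have hint : Integrable fun x ↦ -(x * gaussianPDFReal 0 1 x) :=
    ((integrable_gaussianReal_iff one_ne_zero).1 IsGaussian.integrable_id).neg
  have hlim := tendsto_zero_of_hasDerivAt_of_integrableOn_Iic (a := t) (fun x _ ↦ hderiv x)
    hint.integrableOn (integrable_gaussianPDFReal 0 1).integrableOn
  have hftc := integral_Iic_of_hasDerivAt_of_tendsto' (a := t) (fun x _ ↦ hderiv x)
    hint.integrableOn hlim
  rw [integral_neg, sub_zero] at hftc
  rw [← hftc, neg_neg, ← integral_indicator measurableSet_Iic,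
    integral_gaussianReal_eq_integral_smul one_ne_zero, ← integral_indicator measurableSet_Iic]
  congr with x
  simp [Set.indicator_apply, mul_comm]

lemma gaussianPDFReal_zero_one_zero : gaussianPDFReal 0 1 0 = √(2 / Real.pi) / 2 := by
  have hsqrt : √2 ^ 2 = (2 : ℝ) := Real.sq_sqrt zero_le_two
  simp only [gaussianPDFReal, NNReal.coe_one, mul_one, sub_self, ne_eq, OfNat.ofNat_ne_zero,
    not_false_eq_true, zero_pow, neg_zero, zero_div, Real.exp_zero, Real.sqrt_div zero_le_two,
    Real.sqrt_mul zero_le_two]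
  field_simp
  exact hsqrt.symm

end StandardGaussianDistribution

section IndependentMaximum

variable {Ω ι : Type*} [MeasurableSpace Ω] {P : Measure Ω}

/-- The law on `ι → ℝ` of a family of independent standard Normal variables. -/
noncomputable abbrev stdGaussianPi (ι : Type*) [Fintype ι] : Measure (ι → ℝ) :=
  Measure.pi fun _ ↦ gaussianReal 0 1

lemma setOf_iSup_le [Finite ι] [Nonempty ι] (t : ℝ) :
    {x : ι → ℝ | ⨆ i, x i ≤ t} = Set.univ.pi fun _ ↦ Set.Iic t := by
  ext x
  simp [ciSup_le_iff (Set.finite_range x).bddAbove, Pi.le_def]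

variable [Fintype ι]

lemma integrable_id_stdGaussianPi : Integrable id (stdGaussianPi ι) :=
  Integrable.of_eval fun _ ↦ integrable_eval IsGaussian.integrable_id

lemma integral_eq_div_of_measureReal_le_eq_pow [IsProbabilityMeasure P] {U : Ω → ℝ}
    (hU : AEMeasurable U P) (hU_mem : ∀ ω, U ω ∈ Set.Icc 0 1) {m : ℕ}
    (hcdf : ∀ s ∈ Set.Ioo (0 : ℝ) 1, P.real {ω | U ω ≤ s} = s ^ m) :
    ∫ ω, U ω ∂P = m / (m + 1) := by
  have hU_int : Integrable U P := Integrable.of_mem_Icc 0 1 hU (ae_of_all _ hU_mem)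
  have hcompl : ∫ ω, (1 - U ω) ∂P = 1 / (m + 1) := calc
    ∫ ω, (1 - U ω) ∂P = ∫ t in Set.Ioc 0 1, P.real {ω | t ≤ 1 - U ω} :=
        ((integrable_const 1).sub hU_int).integral_eq_integral_Ioc_meas_le
          (ae_of_all _ fun ω ↦ sub_nonneg.2 (hU_mem ω).2)
          (ae_of_all _ fun ω ↦ sub_le_self _ (hU_mem ω).1)
    _ = ∫ t in Set.Ioo 0 1, (1 - t) ^ m := by
        rw [integral_Ioc_eq_integral_Ioo]
        refine setIntegral_congr_fun measurableSet_Ioo fun t ht ↦ ?_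
        simpa only [le_sub_comm] using hcdf (1 - t) ⟨sub_pos.2 ht.2, sub_lt_self _ ht.1⟩
    _ = 1 / (m + 1) := by
        rw [← integral_Ioc_eq_integral_Ioo, ← intervalIntegral.integral_of_le zero_le_one,
          intervalIntegral.integral_comp_sub_left (fun t : ℝ ↦ t ^ m)]
        simp
  rw [integral_sub (integrable_const 1) hU_int, integral_const, probReal_univ, one_smul,
    sub_eq_iff_eq_add, ← sub_eq_iff_eq_add'] at hcompl
  rw [← hcompl]
  field_simp
  ring

lemma measureReal_pi_iSup_le [Nonempty ι] (μ : Measure ℝ) [SigmaFinite μ] (t : ℝ) :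
    (Measure.pi fun _ : ι ↦ μ).real {x | ⨆ i, x i ≤ t} = μ.real (Set.Iic t) ^ Fintype.card ι := by
  rw [setOf_iSup_le, measureReal_def, Measure.pi_pi, Finset.prod_const, Finset.card_univ,
    ENNReal.toReal_pow, measureReal_def]

lemma setIntegral_univ_pi_comp_eval [DecidableEq ι] {α : ι → Type*} [∀ i, MeasurableSpace (α i)]
    {μ : ∀ i, Measure (α i)} [∀ i, SigmaFinite (μ i)] (s : ∀ i, Set (α i)) (i : ι) {f : α i → ℝ}
    (hf : AEStronglyMeasurable f (μ i)) :
    ∫ x in Set.univ.pi s, f (x i) ∂Measure.pi μ =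
      (∏ j ∈ Finset.univ.erase i, (μ j).real (s j)) * ∫ y in s i, f y ∂μ i := by
  have hmap : ((Measure.pi μ).restrict (Set.univ.pi s)).map (Function.eval i) =
      (∏ j ∈ Finset.univ.erase i, μ j (s j)) • (μ i).restrict (s i) := by
    simp [Measure.restrict_pi_pi, Measure.pi_map_eval]
  calc ∫ x in Set.univ.pi s, f (x i) ∂Measure.pi μ
    _ = ∫ y, f y ∂((Measure.pi μ).restrict (Set.univ.pi s)).map (Function.eval i) :=
        (integral_map (measurable_pi_apply i).aemeasurable
          (hmap ▸ (hf.mono_measure Measure.restrict_le_self).smul_measure _)).symm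
    _ = (∏ j ∈ Finset.univ.erase i, (μ j).real (s j)) * ∫ y in s i, f y ∂μ i := by
        rw [hmap, integral_smul_measure, ENNReal.toReal_prod, smul_eq_mul]
        rfl

lemma setIntegral_iSup_nonpos_eval_stdGaussianPi [Nonempty ι] (i : ι) :
    ∫ x in {x | ⨆ j, x j ≤ 0}, x i ∂stdGaussianPi ι =
      -(√(2 / Real.pi) * (1 / 2) ^ Fintype.card ι) := by
  classical
  have hcard : Fintype.card ι = Finset.card (Finset.univ.erase i) + 1 := by
    rw [Finset.card_erase_add_one (Finset.mem_univ i), Finset.card_univ]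
  have heval := setIntegral_univ_pi_comp_eval (μ := fun _ : ι ↦ gaussianReal 0 1)
    (fun _ ↦ Set.Iic 0) i (f := id) aestronglyMeasurable_id
  simp only [id_eq, Finset.prod_const, ← stdGaussianCDF_eq_measureReal_Iic, stdGaussianCDF_zero,
    setIntegral_Iic_id_gaussianReal, gaussianPDFReal_zero_one_zero] at heval
  rw [setOf_iSup_le, heval, hcard]
  ring

lemma integral_stdGaussianCDF_iSup_stdGaussianPi [Nonempty ι] :
    ∫ x, stdGaussianCDF (⨆ i, x i) ∂stdGaussianPi ι =
      Fintype.card ι / (Fintype.card ι + 1) := by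
  refine integral_eq_div_of_measureReal_le_eq_pow
    (continuous_stdGaussianCDF.measurable.comp (by fun_prop)).aemeasurable
    (fun _ ↦ stdGaussianCDF_mem_Icc _) fun s hs ↦ ?_
  obtain ⟨u, rfl⟩ : ∃ u, stdGaussianCDF u = s :=
    ⟨_, stdGaussianCDF_stdGaussianQuantile hs⟩
  simp_rw [Function.comp_apply, strictMono_stdGaussianCDF.le_iff_le]
  rw [measureReal_pi_iSup_le, stdGaussianCDF_eq_measureReal_Iic]

lemma measureReal_compl_iSup_nonpos_stdGaussianPi [Nonempty ι] :
    (stdGaussianPi ι).real {x | ⨆ i, x i ≤ 0}ᶜ =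
      1 - (1 / 2) ^ Fintype.card ι := by
  rw [probReal_compl_eq_one_sub (measurableSet_le (by fun_prop) measurable_const),
    measureReal_pi_iSup_le, ← stdGaussianCDF_eq_measureReal_Iic, stdGaussianCDF_zero]

lemma le_setIntegral_iSup_nonpos_stdGaussianPi [Nonempty ι] :
    -(√(2 / Real.pi) * (1 / 2) ^ Fintype.card ι) ≤
      ∫ x in {x | ⨆ i, x i ≤ 0}, ⨆ i, x i ∂stdGaussianPi ι := by
  rw [← setIntegral_iSup_nonpos_eval_stdGaussianPi (Classical.arbitrary ι)]
  exact integral_mono (integrable_id_stdGaussianPi.eval _).integrableOn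
    (integrable_iSup integrable_id_stdGaussianPi).integrableOn
    fun x ↦ le_ciSup (Set.finite_range x).bddAbove _

lemma integrable_stdGaussianCDF_comp [IsFiniteMeasure P] {f : Ω → ℝ} (hf : AEMeasurable f P) :
    Integrable (fun ω ↦ stdGaussianCDF (f ω)) P :=
  Integrable.of_mem_Icc 0 1 (continuous_stdGaussianCDF.measurable.comp_aemeasurable hf)
    (ae_of_all _ fun _ ↦ stdGaussianCDF_mem_Icc _)

lemma setIntegral_stdGaussianCDF_sub_nonneg [Nonempty ι] {u : ℝ} (hu : 0 ≤ u)
    (hu_cdf : stdGaussianCDF u ≤ Fintype.card ι / (Fintype.card ι + 1)) :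
    0 ≤ ∫ x in {x | ⨆ i, x i ≤ 0}ᶜ, (stdGaussianCDF (⨆ i, x i) - stdGaussianCDF u)
      ∂stdGaussianPi ι := by
  have hΦ_int : Integrable (fun x : ι → ℝ ↦ stdGaussianCDF (⨆ i, x i)) (stdGaussianPi ι) :=
    integrable_stdGaussianCDF_comp (by fun_prop)
  have hmeas : MeasurableSet {x : ι → ℝ | ⨆ i, x i ≤ 0} :=
    measurableSet_le (by fun_prop) measurable_const
  calc 0 ≤ ∫ x, (stdGaussianCDF (⨆ i, x i) - stdGaussianCDF u) ∂stdGaussianPi ι := by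
        rw [integral_sub hΦ_int (integrable_const _), integral_stdGaussianCDF_iSup_stdGaussianPi,
          integral_const, probReal_univ, one_smul]
        exact sub_nonneg.2 hu_cdf
    _ ≤ ∫ x in {x | ⨆ i, x i ≤ 0}ᶜ, (stdGaussianCDF (⨆ i, x i) - stdGaussianCDF u)
          ∂stdGaussianPi ι := by
        refine (integral_add_compl hmeas (hΦ_int.sub (integrable_const _))).ge.trans ?_
        exact add_le_of_nonpos_left (setIntegral_nonpos hmeas fun x hx ↦
          sub_nonpos.2 (strictMono_stdGaussianCDF.monotone (le_trans hx hu)))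

lemma le_setIntegral_iSup_pos_stdGaussianPi [Nonempty ι] {u : ℝ} (hu : 0 ≤ u)
    (hu_cdf : stdGaussianCDF u ≤ Fintype.card ι / (Fintype.card ι + 1)) :
    u * (1 - (1 / 2) ^ Fintype.card ι) ≤
      ∫ x in {x | ⨆ i, x i ≤ 0}ᶜ, ⨆ i, x i ∂stdGaussianPi ι := by
  have hΦ_int : Integrable (fun x : ι → ℝ ↦ stdGaussianCDF (⨆ i, x i)) (stdGaussianPi ι) :=
    integrable_stdGaussianCDF_comp (by fun_prop)
  have hsup_int : Integrable (fun x : ι → ℝ ↦ ⨆ i, x i) (stdGaussianPi ι) :=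
    integrable_iSup integrable_id_stdGaussianPi
  have htangent : ∫ x in {x | ⨆ i, x i ≤ 0}ᶜ, (stdGaussianCDF (⨆ i, x i) - stdGaussianCDF u)
        ∂stdGaussianPi ι ≤
      ∫ x in {x | ⨆ i, x i ≤ 0}ᶜ, gaussianPDFReal 0 1 u * ((⨆ i, x i) - u) ∂stdGaussianPi ι :=
    setIntegral_mono_on (hΦ_int.sub (integrable_const _)).integrableOn
      ((hsup_int.sub (integrable_const u)).const_mul _).integrableOn
      (measurableSet_le (by fun_prop) measurable_const).compl fun x hx ↦
        stdGaussianCDF_sub_le_gaussianPDFReal_mul hu (le_of_not_ge hx)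
  have hexcess := (setIntegral_stdGaussianCDF_sub_nonneg hu hu_cdf).trans htangent
  rw [integral_const_mul, mul_nonneg_iff_of_pos_left (gaussianPDFReal_pos _ _ _ one_ne_zero),
    integral_sub hsup_int.integrableOn integrableOn_const, setIntegral_const,
    measureReal_compl_iSup_nonpos_stdGaussianPi, smul_eq_mul, sub_nonneg, mul_comm] at hexcess
  exact hexcess

theorem le_integral_iSup_stdGaussianPi [Nonempty ι] {u : ℝ} (hu : 0 ≤ u)
    (hu_cdf : stdGaussianCDF u ≤ Fintype.card ι / (Fintype.card ι + 1)) :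
    u * (1 - (1 / 2) ^ Fintype.card ι) - √(2 / Real.pi) * (1 / 2) ^ Fintype.card ι ≤
      ∫ x, ⨆ i, x i ∂stdGaussianPi ι := by
  have hsplit := integral_add_compl (measurableSet_le (f := fun x : ι → ℝ ↦ ⨆ i, x i)
    (by fun_prop) (measurable_const (a := 0))) (integrable_iSup integrable_id_stdGaussianPi)
  simp only [id_eq] at hsplit
  linarith [le_setIntegral_iSup_nonpos_stdGaussianPi (ι := ι),
    le_setIntegral_iSup_pos_stdGaussianPi hu hu_cdf]

lemma le_integral_iSup_stdGaussianPi_of_le_card [Nonempty ι] {u x : ℝ} (hx : 0 ≤ x)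
    (hx_card : x ≤ Fintype.card ι) (hu : 0 ≤ u) (hu_cdf : stdGaussianCDF u ≤ 1 - 1 / (x + 1)) :
    u * (1 - (2 : ℝ) ^ (-x)) - √(2 / Real.pi) * (2 : ℝ) ^ (-x) ≤
      ∫ y, ⨆ i, y i ∂stdGaussianPi ι := by
  have hpow : (1 / 2 : ℝ) ^ Fintype.card ι ≤ (2 : ℝ) ^ (-x) := by
    rw [one_div, inv_pow, ← Real.rpow_natCast, ← Real.rpow_neg two_pos.le]
    exact Real.rpow_le_rpow_of_exponent_le one_le_two (neg_le_neg hx_card)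
  have hcdf : stdGaussianCDF u ≤ Fintype.card ι / (Fintype.card ι + 1) := calc
    stdGaussianCDF u ≤ 1 - 1 / (x + 1) := hu_cdf
    _ ≤ 1 - 1 / (Fintype.card ι + 1) := by gcongr
    _ = Fintype.card ι / (Fintype.card ι + 1) := by field_simp; ring
  refine le_trans ?_ (le_integral_iSup_stdGaussianPi hu hcdf)
  gcongr

end IndependentMaximum

lemma exists_subset_pairwise_not_card_le_mul {α : Type*} {r : α → α → Prop} [DecidableRel r]
    (hrefl : ∀ i, r i i) (hsymm : ∀ ⦃i j⦄, r i j → r j i) {S : Finset α} {n : ℕ}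
    (hn : ∀ i ∈ S, (S.filter (r · i)).card ≤ n) :
    ∃ T ⊆ S, (T : Set α).Pairwise (fun i j ↦ ¬ r i j) ∧ S.card ≤ T.card * n := by
  classical
  obtain ⟨T, hT⟩ := (S.powerset.filter fun T : Finset α ↦
    (T : Set α).Pairwise fun i j ↦ ¬ r i j).exists_maximal ⟨∅, by simp⟩
  obtain ⟨hTS, hT_pairwise⟩ : T ⊆ S ∧ (T : Set α).Pairwise fun i j ↦ ¬ r i j := by
    simpa using hT.prop
  refine ⟨T, hTS, hT_pairwise, ?_⟩
  have hcover : S ⊆ T.biUnion fun i ↦ S.filter (r · i) := by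
    intro k hk
    by_contra hk_far
    have hk_not (i : α) (hi : i ∈ T) : ¬ r k i := fun h ↦
      hk_far (Finset.mem_biUnion.2 ⟨i, hi, Finset.mem_filter.2 ⟨hk, h⟩⟩)
    have hinsert : ((insert k T : Finset α) : Set α).Pairwise fun i j ↦ ¬ r i j := by
      rw [Finset.coe_insert]
      exact hT_pairwise.insert fun i hi _ ↦ ⟨hk_not i hi, fun h ↦ hk_not i hi (hsymm h)⟩
    have hkT : k ∈ T := hT.le_of_ge
      (Finset.mem_filter.2 ⟨Finset.mem_powerset.2 (Finset.insert_subset hk hTS), hinsert⟩)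
      (Finset.subset_insert k T) (Finset.mem_insert_self k T)
    exact hk_not k hkT (hrefl k)
  exact (Finset.card_le_card hcover).trans
    (Finset.card_biUnion_le_card_mul _ _ _ fun i hi ↦ hn i (hTS hi))

section MaximumOverSubset

variable {Ω ι : Type*} [MeasurableSpace Ω] {P : Measure Ω} {X : Ω → ι → ℝ}

lemma iSup_coe_le_sup' {T S : Finset ι} (hT : T.Nonempty) (hTS : T ⊆ S) (x : ι → ℝ) :
    ⨆ i : T, x i ≤ S.sup' (hT.mono hTS) x :=
  have := hT.to_subtype
  ciSup_le fun i ↦ Finset.le_sup' x (hTS i.2)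

lemma iSup_coe_eq_sup' {S : Finset ι} (hS : S.Nonempty) (x : ι → ℝ) :
    ⨆ i : S, x i = S.sup' hS x :=
  (iSup_coe_le_sup' hS subset_rfl x).antisymm
    (Finset.sup'_le hS x fun i hi ↦ le_ciSup (Set.finite_range fun i : S ↦ x i).bddAbove ⟨i, hi⟩)

lemma integrable_sup' (hX : ∀ i, Integrable (fun ω ↦ X ω i) P) {S : Finset ι} (hS : S.Nonempty) :
    Integrable (fun ω ↦ S.sup' hS (X ω)) P := by
  have := hS.to_subtype
  simp only [← iSup_coe_eq_sup' hS]
  exact integrable_iSup (X := fun ω (i : S) ↦ X ω i) (Integrable.of_eval fun i ↦ hX i)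

lemma integral_sup'_nonneg (hX : ∀ i, Integrable (fun ω ↦ X ω i) P)
    (hX_mean : ∀ i, ∫ ω, X ω i ∂P = 0) {S : Finset ι} (hS : S.Nonempty) :
    0 ≤ ∫ ω, S.sup' hS (X ω) ∂P := by
  obtain ⟨i, hi⟩ := id hS
  rw [← hX_mean i]
  exact integral_mono (hX i) (integrable_sup' hX hS) fun ω ↦ Finset.le_sup' (X ω) hi

variable [Finite ι]

lemma sqrt_one_sub_mul_integral_iSup_stdGaussianPi_le {τ : ℝ} (hX : HasGaussianLaw X P)
    (hX_mean : ∀ i, ∫ ω, X ω i ∂P = 0) (hX_var : ∀ i, Var[fun ω ↦ X ω i; P] = 1)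
    {T S : Finset ι} (hT : T.Nonempty) (hTS : T ⊆ S)
    (hcov : (T : Set ι).Pairwise fun i j ↦ cov[fun ω ↦ X ω i, fun ω ↦ X ω j; P] ≤ τ)
    (hτ : τ ≤ 1) :
    √(1 - τ) * ∫ x, ⨆ i, x i ∂stdGaussianPi T ≤ ∫ ω, S.sup' (hT.mono hTS) (X ω) ∂P := by
  cases nonempty_fintype ι
  have := hT.to_subtype
  have hX_int (i : ι) := (hX.eval i).integrable
  have hX_restrict : HasGaussianLaw (fun ω (i : T) ↦ X ω i) P := hX.map_fun
    (ContinuousLinearMap.pi fun i : T ↦ ContinuousLinearMap.proj (φ := fun _ : ι ↦ ℝ) (i : ι))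
  calc √(1 - τ) * ∫ x, ⨆ i, x i ∂stdGaussianPi T
    _ ≤ ∫ ω, ⨆ i : T, X ω i ∂P :=
        sqrt_one_sub_mul_integral_iSup_le (Z := id) hX_restrict (fun i ↦ hX_mean i)
          (fun i ↦ hX_var i) (fun i j hij ↦ hcov i.2 j.2 (Subtype.coe_injective.ne hij))
          (fun i ↦ (measurePreserving_eval (fun _ : T ↦ gaussianReal 0 1) i).hasLaw)
          (iIndepFun_pi (X := fun _ ↦ id) fun _ ↦ aemeasurable_id) hτ
    _ ≤ ∫ ω, S.sup' (hT.mono hTS) (X ω) ∂P :=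
        integral_mono (integrable_iSup hX_restrict.integrable) (integrable_sup' hX_int _)
          fun ω ↦ iSup_coe_le_sup' hT hTS (X ω)

theorem mul_sqrt_one_sub_mul_le_integral_sup' {τ : ℝ} (hX : HasGaussianLaw X P)
    (hX_mean : ∀ i, ∫ ω, X ω i ∂P = 0) (hX_var : ∀ i, Var[fun ω ↦ X ω i; P] = 1) (hτ : τ < 1)
    {S : Finset ι} (hS : S.Nonempty) {n : ℕ}
    (hn : ∀ i ∈ S,
      (S.filter fun k ↦ τ < cov[fun ω ↦ X ω k, fun ω ↦ X ω i; P]).card ≤ n)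
    {u : ℝ} (hu : 0 < u) (hu_cdf : stdGaussianCDF u ≤ 1 - 1 / ((S.card : ℝ) / n + 1)) :
    u * √(1 - τ) * (1 - (2 : ℝ) ^ (-((S.card : ℝ) / n)) -
      √(2 / Real.pi) / u * (2 : ℝ) ^ (-((S.card : ℝ) / n))) ≤ ∫ ω, S.sup' hS (X ω) ∂P := by
  obtain ⟨T, hTS, hT_cov, hcard⟩ := exists_subset_pairwise_not_card_le_mul
    (r := fun i j ↦ τ < cov[fun ω ↦ X ω i, fun ω ↦ X ω j; P])
    (fun i ↦ hτ.trans_eq ((covariance_self (hX.eval i).aemeasurable).trans (hX_var i)).symm)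
    (fun i j h ↦ h.trans_eq (covariance_comm _ _)) hn
  have hcard_pos : 0 < T.card * n := hS.card_pos.trans_le hcard
  have hT : T.Nonempty := Finset.card_pos.1 (Nat.pos_of_mul_pos_right hcard_pos)
  have hn_pos : (0 : ℝ) < n := by exact_mod_cast Nat.pos_of_mul_pos_left hcard_pos
  have hx : (S.card : ℝ) / n ≤ Fintype.card T := by
    rw [div_le_iff₀ hn_pos, Fintype.card_coe]
    exact_mod_cast hcard
  have := hT.to_subtype
  set x := (S.card : ℝ) / n
  calc u * √(1 - τ) * (1 - (2 : ℝ) ^ (-x) - √(2 / Real.pi) / u * (2 : ℝ) ^ (-x))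
    _ = √(1 - τ) * (u * (1 - (2 : ℝ) ^ (-x)) - √(2 / Real.pi) * (2 : ℝ) ^ (-x)) := by
        field_simp
    _ ≤ √(1 - τ) * ∫ y, ⨆ i, y i ∂stdGaussianPi T :=
        mul_le_mul_of_nonneg_left
          (le_integral_iSup_stdGaussianPi_of_le_card (by positivity) hx hu.le hu_cdf)
          (Real.sqrt_nonneg _)
    _ ≤ ∫ ω, S.sup' hS (X ω) ∂P :=
        sqrt_one_sub_mul_integral_iSup_stdGaussianPi_le hX hX_mean hX_var hT hTS
          (fun i hi j hj hij ↦ not_lt.1 (hT_cov hi hj hij)) hτ.le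

theorem stdGaussianQuantile_mul_sqrt_one_sub_mul_le_integral_sup' {τ : ℝ}
    (hX : HasGaussianLaw X P) (hX_mean : ∀ i, ∫ ω, X ω i ∂P = 0)
    (hX_var : ∀ i, Var[fun ω ↦ X ω i; P] = 1) (hτ : τ < 1) {S : Finset ι} (hS : S.Nonempty) {n : ℕ}
    (hn : ∀ i ∈ S,
      (S.filter fun k ↦ τ < cov[fun ω ↦ X ω k, fun ω ↦ X ω i; P]).card ≤ n) :
    stdGaussianQuantile (1 - 1 / ((S.card : ℝ) / n + 1)) * √(1 - τ) *
      (1 - (2 : ℝ) ^ (-((S.card : ℝ) / n)) -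
        √(2 / Real.pi) / stdGaussianQuantile (1 - 1 / ((S.card : ℝ) / n + 1)) *
          (2 : ℝ) ^ (-((S.card : ℝ) / n))) ≤ ∫ ω, S.sup' hS (X ω) ∂P := by
  have hx : 0 ≤ (S.card : ℝ) / n := by positivity
  rcases le_or_gt (stdGaussianQuantile (1 - 1 / ((S.card : ℝ) / n + 1))) 0 with hu | hu
  -- This includes `u = 0`, where the left-hand side is the junk value `0`.
  · refine le_trans (mul_nonpos_of_nonpos_of_nonneg
      (mul_nonpos_of_nonpos_of_nonneg hu (Real.sqrt_nonneg _)) (sub_nonneg.2 ?_))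
      (integral_sup'_nonneg (fun i ↦ (hX.eval i).integrable) hX_mean hS)
    refine (mul_nonpos_of_nonpos_of_nonneg
      (div_nonpos_of_nonneg_of_nonpos (Real.sqrt_nonneg _) hu) (by positivity)).trans
      (sub_nonneg.2 ?_)
    exact Real.rpow_le_one_of_one_le_of_nonpos one_le_two (neg_nonpos.2 hx)
  · refine mul_sqrt_one_sub_mul_le_integral_sup' hX hX_mean hX_var hτ hS hn hu
      (stdGaussianCDF_stdGaussianQuantile ⟨lt_of_le_of_ne ?_ ?_, sub_lt_self _ (by positivity)⟩).le
    · exact sub_nonneg.2 (div_le_one_of_le₀ (by linarith) (by positivity))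
    · exact fun h ↦ hu.ne' (h ▸ stdGaussianQuantile_zero)

end MaximumOverSubset

section JointGaussian

variable {Ω ι : Type*} [MeasureSpace Ω] [Fintype ι] {X : ι → Ω → ℝ}

lemma IsJointGaussian.aemeasurable (hX : IsJointGaussian X) (i : ι) : AEMeasurable (X i) ℙ := by
  classical
  obtain ⟨m, v, hmap⟩ := hX (Pi.single i 1)
  simp only [Pi.single_apply, ite_mul, one_mul, zero_mul, Finset.sum_ite_eq', Finset.mem_univ,
    if_true] at hmap
  exact AEMeasurable.of_map_ne_zero (hmap ▸ IsProbabilityMeasure.ne_zero _)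

lemma IsJointGaussian.hasGaussianLaw (hX : IsJointGaussian X) :
    HasGaussianLaw (fun ω i ↦ X i ω) ℙ := by
  classical
  have hX_meas : AEMeasurable (fun ω i ↦ X i ω) ℙ := aemeasurable_pi_lambda _ hX.aemeasurable
  refine ⟨isGaussian_of_map_eq_gaussianReal fun L ↦ ?_⟩
  obtain ⟨m, v, hmap⟩ := hX fun i ↦ L fun j ↦ if i = j then 1 else 0
  refine ⟨m, v, ?_⟩
  rw [AEMeasurable.map_map_of_aemeasurable L.continuous.aemeasurable hX_meas, ← hmap]
  congr with ω
  exact (L.toLinearMap.pi_apply_eq_sum_univ _).trans (by simp [mul_comm])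

lemma covar_eq_covariance [IsProbabilityMeasure (ℙ : Measure Ω)] {Y Z : Ω → ℝ}
    (hY : MemLp Y 2 ℙ) (hZ : MemLp Z 2 ℙ) : covar Y Z = cov[Y, Z] :=
  (covariance_eq_sub hY hZ).symm

end JointGaussian

theorem expected_max_lower_bound_UDD_general {Ω ι : Type*} [MeasureSpace Ω] [Fintype ι]
    {X : ι → Ω → ℝ} (hX : IsJointGaussian X) (hmarg : ∀ i, Measure.map (X i) ℙ = gaussianReal 0 1)
    {τ : ℝ} (hτ : τ < 1) {n : ℕ} (hn : ∀ i, Nat.card {k | τ < covar (X k) (X i)} ≤ n)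
    {S : Finset ι} (hS : S.Nonempty) :
    stdGaussianQuantile (1 - 1 / ((S.card : ℝ) / n + 1)) /
        stdGaussianQuantile (1 - 1 / S.card) * √(1 - τ) *
      (1 - (2 : ℝ) ^ (-((S.card : ℝ) / n)) -
        √(2 / Real.pi) / stdGaussianQuantile (1 - 1 / ((S.card : ℝ) / n + 1)) *
          (2 : ℝ) ^ (-((S.card : ℝ) / n))) ≤
      ∫ ω, (S.sup' hS fun j ↦ X j ω) / stdGaussianQuantile (1 - 1 / S.card) := by
  have hlaw (i : ι) : HasLaw (X i) (gaussianReal 0 1) ℙ := ⟨hX.aemeasurable i, hmarg i⟩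
  have hX_law := hX.hasGaussianLaw
  have hprob := hX_law.isProbabilityMeasure
  have hmean (i : ι) : ∫ ω, X i ω = 0 := by rw [(hlaw i).integral_eq, integral_id_gaussianReal]
  have hvar (i : ι) : Var[X i] = 1 := by
    rw [(hlaw i).variance_eq, variance_id_gaussianReal, NNReal.coe_one]
  have hcard (i : ι) (_ : i ∈ S) : (S.filter fun k ↦ τ < cov[X k, X i]).card ≤ n := by
    simp only [← covar_eq_covariance (hX_law.eval _).memLp_two (hX_law.eval _).memLp_two]
    rw [← Set.ncard_coe_finset]
    exact (Set.ncard_le_ncard (by simp +contextual [Set.subset_def]) (Set.toFinite _)).trans (hn i)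
  rw [integral_div, div_mul_eq_mul_div, div_mul_eq_mul_div]
  exact div_le_div_of_nonneg_right
    (stdGaussianQuantile_mul_sqrt_one_sub_mul_le_integral_sup' hX_law hmean hvar hτ hS hcard)
    (stdGaussianQuantile_one_sub_inv_natCast_nonneg hS.card_ne_zero)

/-- Sudakov–Fernique lower bound for UDD Gaussian arrays: for every subset `S_p ⊆ [p]`
with `q = |S_p|` and every `τ ∈ (0,1)`,
`E[max_{j∈S_p} ε_p(j)/u_q] ≥ (u_{q/N(τ)+1}/u_q) √(1-τ)
  (1 - 2^{-q/N(τ)} - (√(2/π)/u_{q/N(τ)+1}) 2^{-q/N(τ)})`,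
where `u_x = Φ^{←}(1 - 1/x)`. -/
theorem expected_max_lower_bound_UDD
    {Ω : Type*} [MeasureSpace Ω] [IsProbabilityMeasure (ℙ : Measure Ω)]
    (ε : (p : ℕ) → Fin p → Ω → ℝ)
    (hmeas : ∀ p i, Measurable (ε p i))
    (hGauss : ∀ p, IsJointGaussian (ε p))
    (hmarg : ∀ p i, Measure.map (ε p i) ℙ = gaussianReal 0 1)
    (N : ℝ → ℕ)
    (hUDD : ∀ τ : ℝ, 0 < τ → ∀ p : ℕ, ∀ i : Fin p,
      Nat.card {k : Fin p | τ < covar (ε p k) (ε p i)} ≤ N τ)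
    (p : ℕ) (S : Finset (Fin p)) (hS : S.Nonempty) (τ : ℝ) (hτ : τ ∈ Set.Ioo (0 : ℝ) 1) :
    (stdGaussianQuantile (1 - 1 / ((S.card : ℝ) / (N τ : ℝ) + 1)) /
          stdGaussianQuantile (1 - 1 / (S.card : ℝ))) *
        Real.sqrt (1 - τ) *
        (1 - (2 : ℝ) ^ (-((S.card : ℝ) / (N τ : ℝ))) -
          (Real.sqrt (2 / Real.pi) /
              stdGaussianQuantile (1 - 1 / ((S.card : ℝ) / (N τ : ℝ) + 1))) *
            (2 : ℝ) ^ (-((S.card : ℝ) / (N τ : ℝ)))) ≤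
      ∫ ω, (S.sup' hS fun j => ε p j ω) / stdGaussianQuantile (1 - 1 / (S.card : ℝ)) ∂ℙ :=
  expected_max_lower_bound_UDD_general (hGauss p) (hmarg p) hτ.2 (hUDD τ hτ.1 p) hS
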